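/- Let s ∈ ℂ and let x ∈ EuclideanSpace ℝ (Fin 3) with x ≠ 0. Then the Laplacian of the function y ↦ G(s, y) at the point x equals s² · G(s, x); that is, Δ(G(s,·))(x) = s² · G(s, x). -/

import Mathlib

/-- The fundamental solution `G(s, x) = exp(−s‖x‖)/(4π‖x‖)` of the time-harmonic
Maxwell/Helmholtz operator. -/
noncomputable def fundSol (s : ℂ) (x : EuclideanSpace ℝ (Fin 3)) : ℂ :=
  Complex.exp (-s * (‖x‖ : ℂ)) / (4 * Real.pi * (‖x‖ : ℂ))

/-- The Laplacian of a complex-valued function on `EuclideanSpace ℝ (Fin 3)`: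
sum over the (orthonormal) standard basis of the second directional derivatives. -/
noncomputable def laplacian (f : EuclideanSpace ℝ (Fin 3) → ℂ)
    (x : EuclideanSpace ℝ (Fin 3)) : ℂ :=
  ∑ i : Fin 3,
    fderiv ℝ (fun y => fderiv ℝ f y (EuclideanSpace.single i (1 : ℝ))) x
      (EuclideanSpace.single i (1 : ℝ))

theorem hasDerivAt_ofReal_aux (r : ℝ) : HasDerivAt (fun t : ℝ => (t : ℂ)) 1 r := by
  simpa using (hasDerivAt_id r).ofReal_comp

theorem hasFDerivAt_norm_aux (x : EuclideanSpace ℝ (Fin 3)) (hx : x ≠ 0) :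
    HasFDerivAt (fun y : EuclideanSpace ℝ (Fin 3) => ‖y‖) (‖x‖⁻¹ • innerSL ℝ x) x := by
  have hn : ‖x‖ ≠ 0 := norm_ne_zero_iff.mpr hx
  have h := ((hasStrictFDerivAt_norm_sq x).hasFDerivAt).sqrt (by positivity)
  have e : (fun y : EuclideanSpace ℝ (Fin 3) => √(‖y‖ ^ 2)) = fun y => ‖y‖ := by
    funext y
    exact Real.sqrt_sq (norm_nonneg y)
  rw [e] at h
  have e2 : (1 / (2 * √(‖x‖ ^ 2))) • 2 • (innerSL ℝ) x = ‖x‖⁻¹ • innerSL ℝ x := by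
    rw [Real.sqrt_sq (norm_nonneg x), ← Nat.cast_smul_eq_nsmul ℝ, smul_smul]
    congr 1
    push_cast
    field_simp
  rw [e2] at h
  exact h

theorem hasFDerivAt_radial_aux (g : ℝ → ℂ) (g' : ℂ) (x : EuclideanSpace ℝ (Fin 3)) (hx : x ≠ 0)
    (hg : HasDerivAt g g' ‖x‖) :
    HasFDerivAt (fun y : EuclideanSpace ℝ (Fin 3) => g ‖y‖)
      (((1 : ℝ →L[ℝ] ℝ).smulRight g').comp (‖x‖⁻¹ • innerSL ℝ x)) x :=
  HasFDerivAt.comp x hg.hasFDerivAt (hasFDerivAt_norm_aux x hx)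

theorem hasDerivAt_exp_aux (s : ℂ) (r : ℝ) :
    HasDerivAt (fun t : ℝ => Complex.exp (-s * (t : ℂ))) (-s * Complex.exp (-s * (r : ℂ))) r := by
  have h := ((hasDerivAt_ofReal_aux r).const_mul (-s)).cexp
  convert h using 1
  ring

theorem hasDerivAt_g_aux (s : ℂ) (r : ℝ) (hr : r ≠ 0) :
    HasDerivAt (fun t : ℝ => Complex.exp (-s * (t : ℂ)) / (4 * Real.pi * (t : ℂ)))
      (-(s * r + 1) * Complex.exp (-s * (r : ℂ)) / (4 * Real.pi * (r : ℂ) ^ 2)) r := by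
  have hr' : (r : ℂ) ≠ 0 := by exact_mod_cast hr
  have hpi : (Real.pi : ℂ) ≠ 0 := by exact_mod_cast Real.pi_ne_zero
  have h := (hasDerivAt_exp_aux s r).div
    ((hasDerivAt_ofReal_aux r).const_mul (4 * Real.pi : ℂ))
    (by simp [hr, Real.pi_ne_zero])
  refine HasDerivAt.congr_deriv h ?_
  simp
  field_simp
  ring

theorem hasDerivAt_h_aux (s : ℂ) (r : ℝ) (hr : r ≠ 0) :
    HasDerivAt (fun t : ℝ => -(s * t + 1) * Complex.exp (-s * (t : ℂ)) /
        (4 * Real.pi * (t : ℂ) ^ 3))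
      ((s ^ 2 * r ^ 2 + 3 * s * r + 3) * Complex.exp (-s * (r : ℂ)) /
        (4 * Real.pi * (r : ℂ) ^ 4)) r := by
  have hr' : (r : ℂ) ≠ 0 := by exact_mod_cast hr
  have hpi : (Real.pi : ℂ) ≠ 0 := by exact_mod_cast Real.pi_ne_zero
  have hid := hasDerivAt_ofReal_aux r
  have h := ((((hid.const_mul s).add_const 1).neg).mul (hasDerivAt_exp_aux s r)).div
    ((hid.pow 3).const_mul (4 * Real.pi : ℂ))
    (by simp [hr, Real.pi_ne_zero])
  refine HasDerivAt.congr_deriv h ?_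
  simp
  field_simp
  ring

theorem fderiv_fundSol_aux (s : ℂ) (x : EuclideanSpace ℝ (Fin 3)) (hx : x ≠ 0) (i : Fin 3) :
    fderiv ℝ (fundSol s) x (EuclideanSpace.single i (1 : ℝ)) =
      (-(s * (‖x‖ : ℝ) + 1) * Complex.exp (-s * ((‖x‖ : ℝ) : ℂ)) /
        (4 * Real.pi * ((‖x‖ : ℝ) : ℂ) ^ 3)) * ((x i : ℝ) : ℂ) := by
  have hn : ‖x‖ ≠ 0 := norm_ne_zero_iff.mpr hx
  have hn' : (‖x‖ : ℂ) ≠ 0 := by exact_mod_cast hn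
  have hpi : (Real.pi : ℂ) ≠ 0 := by exact_mod_cast Real.pi_ne_zero
  have h := hasFDerivAt_radial_aux _ _ x hx (hasDerivAt_g_aux s ‖x‖ hn)
  have h2 : fderiv ℝ (fundSol s) x = _ := h.fderiv
  rw [h2]
  simp [EuclideanSpace.inner_single_right]
  field_simp

theorem second_aux (s : ℂ) (x : EuclideanSpace ℝ (Fin 3)) (hx : x ≠ 0) (i : Fin 3) :
    fderiv ℝ (fun y => fderiv ℝ (fundSol s) y (EuclideanSpace.single i (1 : ℝ))) x
      (EuclideanSpace.single i (1 : ℝ)) =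
      (-(s * (‖x‖ : ℝ) + 1) * Complex.exp (-s * ((‖x‖ : ℝ) : ℂ)) /
        (4 * Real.pi * ((‖x‖ : ℝ) : ℂ) ^ 3)) +
      ((s ^ 2 * (‖x‖ : ℝ) ^ 2 + 3 * s * (‖x‖ : ℝ) + 3) * Complex.exp (-s * ((‖x‖ : ℝ) : ℂ)) /
        (4 * Real.pi * ((‖x‖ : ℝ) : ℂ) ^ 5)) * ((x i : ℝ) : ℂ) ^ 2 := by
  have hn : ‖x‖ ≠ 0 := norm_ne_zero_iff.mpr hx
  have hn' : (‖x‖ : ℂ) ≠ 0 := by exact_mod_cast hn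
  have hpi : (Real.pi : ℂ) ≠ 0 := by exact_mod_cast Real.pi_ne_zero
  have hev : (fun y => fderiv ℝ (fundSol s) y (EuclideanSpace.single i (1 : ℝ))) =ᶠ[nhds x]
      (fun y => (-(s * (‖y‖ : ℝ) + 1) * Complex.exp (-s * ((‖y‖ : ℝ) : ℂ)) /
        (4 * Real.pi * ((‖y‖ : ℝ) : ℂ) ^ 3)) * ((y i : ℝ) : ℂ)) := by
    filter_upwards [isOpen_ne.mem_nhds hx] with y hy
    exact fderiv_fundSol_aux s y hy i
  rw [hev.fderiv_eq]
  have h := hasFDerivAt_radial_aux _ _ x hx (hasDerivAt_h_aux s ‖x‖ hn)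
  have hc : HasFDerivAt (fun y : EuclideanSpace ℝ (Fin 3) => ((y i : ℝ) : ℂ))
      (Complex.ofRealCLM.comp (EuclideanSpace.proj i : EuclideanSpace ℝ (Fin 3) →L[ℝ] ℝ)) x :=
    (Complex.ofRealCLM.comp
      (EuclideanSpace.proj i : EuclideanSpace ℝ (Fin 3) →L[ℝ] ℝ)).hasFDerivAt
  have hm := (h.mul hc).fderiv
  simp only [Pi.mul_def] at hm
  rw [hm]
  simp [EuclideanSpace.inner_single_right]
  field_simp

/-- Away from the origin, `G(s,·)` is a fundamental solution of
`Δ − s²`: for `x ≠ 0`, `Δ(G(s,·))(x) = s² · G(s,x)`. -/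
theorem laplacian_fundSol (s : ℂ) (x : EuclideanSpace ℝ (Fin 3)) (hx : x ≠ 0) :
    laplacian (fundSol s) x = s ^ 2 * fundSol s x := by
  have hn : ‖x‖ ≠ 0 := norm_ne_zero_iff.mpr hx
  have hn' : (‖x‖ : ℂ) ≠ 0 := by exact_mod_cast hn
  have hpi : (Real.pi : ℂ) ≠ 0 := by exact_mod_cast Real.pi_ne_zero
  have hsum : ∑ i : Fin 3, ((x i : ℝ) : ℂ) ^ 2 = (‖x‖ : ℂ) ^ 2 := by
    have := EuclideanSpace.real_norm_sq_eq x
    exact_mod_cast this.symm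
  unfold laplacian
  simp only [second_aux s x hx]
  rw [Finset.sum_add_distrib, ← Finset.mul_sum, hsum]
  unfold fundSol
  simp
  field_simp
  ring
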